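/- Let d ≥ 2, let Ω ⊂ ℝ^d be a nonempty bounded open set, and let F, a₀, a₁ ∈ ℝ^{d×d} with a₀ ≠ a₁ and a := a₁ − a₀. Then the infimum, taken over all v ∈ C_c^∞(Ω; ℝ^d), of ∫_Ω dist²(F + Dv(x), {a₀, a₁}) dx equals |Ω| · min_{θ ∈ [0,1]} ( ‖F − a_θ‖² + θ(1−θ)·( ‖a‖² − max_{ξ ∈ S^{d−1}} ‖aξ‖² ) ), where Dv(x) denotes the Jacobian matrix of v at x and |Ω| the Lebesgue measure of Ω. (Both the maximum over the unit sphere S^{d−1} and the minimum over θ ∈ [0,1] are attained.) -/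

import Mathlib

open MeasureTheory

/-- Squared Frobenius norm of a matrix. -/
def frob2 {d : ℕ} (M : Matrix (Fin d) (Fin d) ℝ) : ℝ := ∑ i, ∑ j, (M i j) ^ 2

/-- The Jacobian matrix of `v` at `x`, entry `(i,j)` is `∂ vᵢ / ∂ xⱼ`. -/
noncomputable def jacobian {d : ℕ} (v : (Fin d → ℝ) → (Fin d → ℝ)) (x : Fin d → ℝ) :
    Matrix (Fin d) (Fin d) ℝ :=
  Matrix.of fun i j => fderiv ℝ v x (Pi.single j 1) i

section Lower

variable {d : ℕ}

/-- The mixed derivative of a compactly supported smooth function: symmetry under the integral. -/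
lemma aux_parts (f g : (Fin d → ℝ) → ℝ) (hf : ContDiff ℝ (⊤ : ℕ∞) f) (hg : ContDiff ℝ (⊤ : ℕ∞) g)
    (hfc : HasCompactSupport f) (hgc : HasCompactSupport g) (u w : Fin d → ℝ) :
    ∫ x, fderiv ℝ f x u * fderiv ℝ g x w = ∫ x, fderiv ℝ f x w * fderiv ℝ g x u := by
  have key : ∀ u w : Fin d → ℝ, ∫ x, fderiv ℝ f x u * fderiv ℝ g x w
      = - ∫ x, f x * fderiv ℝ (fun y => fderiv ℝ g y w) x u := by
    intro u w
    have hgw : ContDiff ℝ (⊤ : ℕ∞) (fun y => fderiv ℝ g y w) := by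
      have : ContDiff ℝ (⊤ : ℕ∞) (fderiv ℝ g) := hg.fderiv_right (by simp)
      exact this.clm_apply contDiff_const
    have hfu : ContDiff ℝ (⊤ : ℕ∞) (fun y => fderiv ℝ f y u) := by
      have : ContDiff ℝ (⊤ : ℕ∞) (fderiv ℝ f) := hf.fderiv_right (by simp)
      exact this.clm_apply contDiff_const
    have hgwu : ContDiff ℝ (⊤ : ℕ∞) (fun x => fderiv ℝ (fun y => fderiv ℝ g y w) x u) := by
      have : ContDiff ℝ (⊤ : ℕ∞) (fderiv ℝ (fun y => fderiv ℝ g y w)) := hgw.fderiv_right (by simp)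
      exact this.clm_apply contDiff_const
    have hfuc : HasCompactSupport (fun y => fderiv ℝ f y u) := hfc.fderiv_apply ℝ u
    have := integral_mul_fderiv_eq_neg_fderiv_mul_of_integrable (μ := (volume : Measure (Fin d → ℝ)))
      (f := f) (g := fun y => fderiv ℝ g y w) (v := u)
      ((hfu.continuous.mul hgw.continuous).integrable_of_hasCompactSupport hfuc.mul_right)
      ((hf.continuous.mul hgwu.continuous).integrable_of_hasCompactSupport hfc.mul_right)
      ((hf.continuous.mul hgw.continuous).integrable_of_hasCompactSupport hfc.mul_right)
      (fun x _ => (hf.differentiable (by simp)) x)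
      (fun x _ => (hgw.differentiable (by simp)) x)
    rw [this]; simp
  rw [key u w, key w u]
  congr 2
  ext x
  congr 1
  have hd : DifferentiableAt ℝ (fderiv ℝ g) x :=
    ((hg.fderiv_right (m := (⊤ : ℕ∞)) (by simp)).differentiable (by simp)) x
  have hs : IsSymmSndFDerivAt ℝ g x := by
    apply (hg.contDiffAt).isSymmSndFDerivAt
    simp only [minSmoothness_of_isRCLikeNormedField]
    exact (WithTop.coe_le_coe.2 (le_top : (2 : ℕ∞) ≤ ⊤))
  have h2 : ∀ z y : Fin d → ℝ, fderiv ℝ (fun y => fderiv ℝ g y z) x y = fderiv ℝ (fderiv ℝ g) x y z := by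
    intro z y
    rw [fderiv_clm_apply hd (differentiableAt_const z)]
    simp
  rw [h2, h2]
  exact hs u w

lemma aux_int_zero (f : (Fin d → ℝ) → ℝ) (hf : ContDiff ℝ (⊤ : ℕ∞) f)
    (hfc : HasCompactSupport f) (u : Fin d → ℝ) :
    ∫ x, fderiv ℝ f x u = 0 := by
  have hfu : ContDiff ℝ (⊤ : ℕ∞) (fun y => fderiv ℝ f y u) := by
    have : ContDiff ℝ (⊤ : ℕ∞) (fderiv ℝ f) := hf.fderiv_right (by simp)
    exact this.clm_apply contDiff_const
  have := integral_mul_fderiv_eq_neg_fderiv_mul_of_integrable (μ := (volume : Measure (Fin d → ℝ)))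
      (f := fun _ => (1:ℝ)) (g := f) (v := u)
      (by simp)
      (by simpa using hfu.continuous.integrable_of_hasCompactSupport (hfc.fderiv_apply ℝ u))
      (by simpa using hf.continuous.integrable_of_hasCompactSupport hfc)
      (fun x _ => by simp)
      (fun x _ => (hf.differentiable (by simp)) x)
  simpa using this

/-- The null Lagrangian. -/
def nullL (a g : Matrix (Fin d) (Fin d) ℝ) : ℝ :=
  ∑ i, ∑ k, ∑ j, ∑ l, a k j * a i l * (g i j * g k l - g i l * g k j)

lemma aux_hom {a : Matrix (Fin d) (Fin d) ℝ} {G : ℝ}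
    (hG : ∀ ξ : Fin d → ℝ, ∑ i, ξ i ^ 2 = 1 → ∑ i, (a.mulVec ξ i) ^ 2 ≤ G) (x : Fin d → ℝ) :
    ∑ i, (a.mulVec x i) ^ 2 ≤ G * ∑ i, x i ^ 2 := by
  rcases (Finset.sum_nonneg (fun i _ => sq_nonneg (x i)) : 0 ≤ ∑ i, x i ^ 2).eq_or_lt with h | h
  · have : x = 0 := by
      have := (Finset.sum_eq_zero_iff_of_nonneg (fun i _ => sq_nonneg (x i))).1 h.symm
      ext i; simpa using this i (Finset.mem_univ i)
    subst this; simp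
  · set s := ∑ i, x i ^ 2 with hs
    have hr : 0 < Real.sqrt s := Real.sqrt_pos.2 h
    have hr2 : Real.sqrt s ^ 2 = s := Real.sq_sqrt h.le
    have h1 := hG ((Real.sqrt s)⁻¹ • x) (by
      simp only [Pi.smul_apply, smul_eq_mul, mul_pow, ← Finset.mul_sum]
      rw [← hs, inv_pow, hr2]; field_simp)
    simp only [Matrix.mulVec_smul, Pi.smul_apply, smul_eq_mul, mul_pow, ← Finset.mul_sum] at h1
    rw [inv_pow, hr2, inv_mul_le_iff₀ h] at h1
    linarith

lemma aux_pointwise {a : Matrix (Fin d) (Fin d) ℝ} {G : ℝ}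
    (hG : ∀ ξ : Fin d → ℝ, ∑ i, ξ i ^ 2 = 1 → ∑ i, (a.mulVec ξ i) ^ 2 ≤ G)
    (g : Matrix (Fin d) (Fin d) ℝ) :
    (∑ i, ∑ j, a i j * g i j) ^ 2 + nullL a g ≤ G * frob2 g := by
  set N : Fin d → Fin d → ℝ := fun i k => ∑ j, a k j * g i j with hN
  have h1 : ∑ i, ∑ k, N i k ^ 2 ≤ G * frob2 g := by
    unfold frob2
    rw [Finset.mul_sum]
    refine Finset.sum_le_sum fun i _ => ?_
    exact aux_hom hG (g i)
  have h2 : nullL a g = ∑ i, ∑ k, (N i k * N k i - N i i * N k k) := by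
    unfold nullL
    refine Finset.sum_congr rfl fun i _ => Finset.sum_congr rfl fun k _ => ?_
    simp only [hN, Finset.sum_mul_sum]
    rw [Finset.sum_comm (f := fun p q => a i p * g i p * (a k q * g k q)), ← Finset.sum_sub_distrib]
    refine Finset.sum_congr rfl fun j _ => ?_
    rw [← Finset.sum_sub_distrib]
    refine Finset.sum_congr rfl fun l _ => ?_
    ring
  have h3 : (∑ i, ∑ j, a i j * g i j) ^ 2 = ∑ i, ∑ k, N i i * N k k := by
    rw [sq, Finset.sum_mul_sum]
  have h4 : 0 ≤ ∑ i, ∑ k, (N i k - N k i) ^ 2 :=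
    Finset.sum_nonneg fun i _ => Finset.sum_nonneg fun k _ => sq_nonneg _
  have h5 : ∑ i, ∑ k, (N i k - N k i) ^ 2 = 2 * ∑ i, ∑ k, N i k ^ 2 - 2 * ∑ i, ∑ k, N i k * N k i := by
    have : ∑ i, ∑ k, N k i ^ 2 = ∑ i, ∑ k, N i k ^ 2 := Finset.sum_comm
    calc _ = ∑ i, ∑ k, (N i k ^2 + N k i ^ 2 - 2 * (N i k * N k i)) := by
            refine Finset.sum_congr rfl fun i _ => Finset.sum_congr rfl fun k _ => by ring
      _ = _ := by
        simp only [Finset.sum_sub_distrib, Finset.sum_add_distrib, ← Finset.mul_sum]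
        rw [this]; ring
  rw [h2, h3]
  simp only [Finset.sum_sub_distrib]
  linarith

lemma jac_smooth {v : (Fin d → ℝ) → (Fin d → ℝ)} (hv : ContDiff ℝ (⊤ : ℕ∞) v) (i j : Fin d) :
    Continuous (fun x => jacobian v x i j) := by
  have : Continuous (fderiv ℝ v) := hv.continuous_fderiv (by simp)
  exact (continuous_apply i).comp (this.clm_apply continuous_const)

lemma jac_comp {v : (Fin d → ℝ) → (Fin d → ℝ)} (hv : ContDiff ℝ (⊤ : ℕ∞) v) (i j : Fin d)
    (x : Fin d → ℝ) : jacobian v x i j = fderiv ℝ (fun y => v y i) x (Pi.single j 1) := by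
  have h := hasFDerivAt_pi'.1 ((hv.differentiable (by simp)) x).hasFDerivAt i
  rw [h.fderiv]
  simp [jacobian]

lemma jac_zero {v : (Fin d → ℝ) → (Fin d → ℝ)} {x : Fin d → ℝ} (hx : x ∉ tsupport v) :
    jacobian v x = 0 := by
  ext i j
  have : fderiv ℝ v x = 0 := by
    by_contra h
    exact hx (support_fderiv_subset ℝ h)
  simp [jacobian, this]

lemma jac_supp {v : (Fin d → ℝ) → (Fin d → ℝ)} (hvc : HasCompactSupport v) (i j : Fin d) :
    HasCompactSupport (fun x => jacobian v x i j) := by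
  refine HasCompactSupport.intro hvc (fun x hx => ?_)
  rw [jac_zero hx]; rfl

lemma int_nullL {v : (Fin d → ℝ) → (Fin d → ℝ)} (hv : ContDiff ℝ (⊤ : ℕ∞) v)
    (hvc : HasCompactSupport v) (a : Matrix (Fin d) (Fin d) ℝ) :
    Integrable (fun x => nullL a (jacobian v x)) ∧ ∫ x, nullL a (jacobian v x) = 0 := by
  have hi : ∀ i j k l, Integrable (fun x => jacobian v x i j * jacobian v x k l) := fun i j k l =>
    ((jac_smooth hv i j).mul (jac_smooth hv k l)).integrable_of_hasCompactSupport
      (jac_supp hvc i j).mul_right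
  have hci : ∀ i, HasCompactSupport (fun y => v y i) := fun i =>
    hvc.comp_left (g := fun z : Fin d → ℝ => z i) rfl
  have hvi : ∀ i, ContDiff ℝ (⊤ : ℕ∞) (fun y => v y i) := fun i => contDiff_pi.1 hv i
  have hI : ∀ i k j l, Integrable (fun x => a k j * a i l * (jacobian v x i j * jacobian v x k l
      - jacobian v x i l * jacobian v x k j)) := fun i k j l =>
    ((hi i j k l).sub (hi i l k j)).const_mul _
  constructor
  · unfold nullL
    exact integrable_finsetSum _ fun i _ => integrable_finsetSum _ fun k _ =>
      integrable_finsetSum _ fun j _ => integrable_finsetSum _ fun l _ => hI i k j l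
  · unfold nullL
    rw [integral_finsetSum _ (fun i _ => integrable_finsetSum _ fun k _ =>
      integrable_finsetSum _ fun j _ => integrable_finsetSum _ fun l _ => hI i k j l)]
    refine Finset.sum_eq_zero fun i _ => ?_
    rw [integral_finsetSum _ (fun k _ =>
      integrable_finsetSum _ fun j _ => integrable_finsetSum _ fun l _ => hI i k j l)]
    refine Finset.sum_eq_zero fun k _ => ?_
    rw [integral_finsetSum _ (fun j _ => integrable_finsetSum _ fun l _ => hI i k j l)]
    refine Finset.sum_eq_zero fun j _ => ?_
    rw [integral_finsetSum _ (fun l _ => hI i k j l)]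
    refine Finset.sum_eq_zero fun l _ => ?_
    rw [integral_const_mul, integral_sub (hi i j k l) (hi i l k j)]
    simp only [jac_comp hv]
    rw [aux_parts _ _ (hvi i) (hvi k) (hci i) (hci k), sub_self, mul_zero]

lemma int_lin {v : (Fin d → ℝ) → (Fin d → ℝ)} (hv : ContDiff ℝ (⊤ : ℕ∞) v)
    (hvc : HasCompactSupport v) (f : Matrix (Fin d) (Fin d) ℝ) :
    Integrable (fun x => ∑ i, ∑ j, f i j * jacobian v x i j) ∧
      ∫ x, ∑ i, ∑ j, f i j * jacobian v x i j = 0 := by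
  have hI : ∀ i j, Integrable (fun x => f i j * jacobian v x i j) := fun i j =>
    ((jac_smooth hv i j).integrable_of_hasCompactSupport (jac_supp hvc i j)).const_mul _
  have hci : ∀ i, HasCompactSupport (fun y => v y i) := fun i =>
    hvc.comp_left (g := fun z : Fin d → ℝ => z i) rfl
  have hvi : ∀ i, ContDiff ℝ (⊤ : ℕ∞) (fun y => v y i) := fun i => contDiff_pi.1 hv i
  constructor
  · exact integrable_finsetSum _ fun i _ => integrable_finsetSum _ fun j _ => hI i j
  · rw [integral_finsetSum _ (fun i _ => integrable_finsetSum _ fun j _ => hI i j)]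
    refine Finset.sum_eq_zero fun i _ => ?_
    rw [integral_finsetSum _ (fun j _ => hI i j)]
    refine Finset.sum_eq_zero fun j _ => ?_
    rw [integral_const_mul]
    simp only [jac_comp hv]
    rw [aux_int_zero _ (hvi i) (hci i), mul_zero]

lemma frob2_expand (f g a : Matrix (Fin d) (Fin d) ℝ) (η : ℝ) :
    frob2 (f + g - η • a) = frob2 f + frob2 g + η ^ 2 * frob2 a
      + 2 * (∑ i, ∑ j, f i j * g i j) - 2 * η * (∑ i, ∑ j, a i j * g i j)
      - 2 * η * (∑ i, ∑ j, f i j * a i j) := by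
  unfold frob2
  simp only [Finset.mul_sum, ← Finset.sum_add_distrib, ← Finset.sum_sub_distrib]
  refine Finset.sum_congr rfl fun i _ => Finset.sum_congr rfl fun j _ => ?_
  simp only [Matrix.add_apply, Matrix.sub_apply, Matrix.smul_apply, smul_eq_mul]
  ring

lemma frob2_cont {v : (Fin d → ℝ) → (Fin d → ℝ)} (hv : ContDiff ℝ (⊤ : ℕ∞) v)
    (F a : Matrix (Fin d) (Fin d) ℝ) : Continuous (fun x => frob2 (F + jacobian v x - a)) := by
  unfold frob2
  refine continuous_finsetSum _ fun i _ => continuous_finsetSum _ fun j _ => ?_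
  have := jac_smooth hv i j
  simp only [Matrix.add_apply, Matrix.sub_apply]
  fun_prop

lemma frob2_nonneg (A : Matrix (Fin d) (Fin d) ℝ) : 0 ≤ frob2 A :=
  Finset.sum_nonneg fun _ _ => Finset.sum_nonneg fun _ _ => sq_nonneg _

theorem lower_bound (Ω : Set (Fin d → ℝ)) (hΩopen : IsOpen Ω) (hΩne : Ω.Nonempty)
    (hΩbdd : Bornology.IsBounded Ω)
    (F a₀ a₁ : Matrix (Fin d) (Fin d) ℝ) {G M : ℝ} (hGpos : 0 < G)
    (hG : ∀ ξ : Fin d → ℝ, ∑ i, ξ i ^ 2 = 1 → ∑ i, ((a₁ - a₀).mulVec ξ i) ^ 2 ≤ G)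
    (hM : ∀ θ ∈ Set.Icc (0 : ℝ) 1, M ≤ frob2 (F - ((1 - θ) • a₀ + θ • a₁)) +
          θ * (1 - θ) * (frob2 (a₁ - a₀) - G))
    (v : (Fin d → ℝ) → (Fin d → ℝ)) (hv : ContDiff ℝ (⊤ : ℕ∞) v) (hvc : HasCompactSupport v)
    (hvΩ : tsupport v ⊆ Ω) :
    (volume Ω).toReal * M ≤ ∫ x in Ω,
            min (frob2 (F + jacobian v x - a₀)) (frob2 (F + jacobian v x - a₁)) := by
  set a := a₁ - a₀ with ha
  have hfin : volume Ω ≠ ⊤ := hΩbdd.measure_lt_top.ne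
  have hVpos : 0 < (volume Ω).toReal := ENNReal.toReal_pos (hΩopen.measure_pos volume hΩne).ne' hfin
  set V := (volume Ω).toReal with hV
  have : IsFiniteMeasure (volume.restrict Ω) := ⟨by simpa using hfin.lt_top⟩
  set A : Set (Fin d → ℝ) := {x | frob2 (F + jacobian v x - a₁) < frob2 (F + jacobian v x - a₀)}
    with hA
  have hAm : MeasurableSet A :=
    (isOpen_lt (frob2_cont hv F a₁) (frob2_cont hv F a₀)).measurableSet
  set χ : (Fin d → ℝ) → ℝ := A.indicator (fun _ => 1) with hχ
  have hχi : Integrable χ (volume.restrict Ω) := (integrable_const (1:ℝ)).indicator hAm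
  set θ := (∫ x in Ω, χ x) / V with hθ
  have hθV : ∫ x in Ω, χ x = θ * V := by rw [hθ]; field_simp
  have hχ0 : ∀ x, 0 ≤ χ x := fun x => Set.indicator_nonneg (fun _ _ => zero_le_one) x
  have hχ1 : ∀ x, χ x ≤ 1 := fun x => Set.indicator_le_self' (fun _ _ => zero_le_one) x
  have hχsq : ∀ x, χ x ^ 2 = χ x := fun x => by
    by_cases h : x ∈ A <;> simp [hχ, h]
  have hθ0 : 0 ≤ θ := div_nonneg (integral_nonneg hχ0) hVpos.le
  have hθ1 : θ ≤ 1 := by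
    rw [hθ, div_le_one hVpos]
    calc ∫ x in Ω, χ x ≤ ∫ x in Ω, (1:ℝ) := integral_mono hχi (integrable_const _) hχ1
      _ = V := by simp [Measure.real, hV]
  set f := F - ((1 - θ) • a₀ + θ • a₁) with hf
  have hmin : ∀ x, min (frob2 (F + jacobian v x - a₀)) (frob2 (F + jacobian v x - a₁))
      = frob2 (f + jacobian v x - (χ x - θ) • a) := by
    intro x
    by_cases h : x ∈ A
    · rw [min_eq_right (le_of_lt h)]
      congr 1
      simp only [hχ, h, Set.indicator_of_mem, hf, ha]
      module
    · rw [min_eq_left (not_lt.1 h)]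
      congr 1
      simp only [hχ, h, Set.indicator_of_notMem, hf, ha, not_false_eq_true]
      module
  obtain ⟨hN1, hN2⟩ := int_nullL hv hvc a
  obtain ⟨hL1, hL2⟩ := int_lin hv hvc f
  have hN2' : ∫ x in Ω, nullL a (jacobian v x) = 0 := by
    rw [setIntegral_eq_integral_of_forall_compl_eq_zero, hN2]
    intro x hx
    rw [jac_zero (fun h => hx (hvΩ h))]; simp [nullL]
  have hL2' : ∫ x in Ω, ∑ i, ∑ j, f i j * jacobian v x i j = 0 := by
    rw [setIntegral_eq_integral_of_forall_compl_eq_zero, hL2]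
    intro x hx
    rw [jac_zero (fun h => hx (hvΩ h))]; simp
  set c1 : ℝ := (1 - 2 * θ) * (frob2 a - G) - 2 * (∑ i, ∑ j, f i j * a i j) with hc1
  set c0 : ℝ := frob2 f + θ ^ 2 * (frob2 a - G) + 2 * θ * (∑ i, ∑ j, f i j * a i j) with hc0
  have hpt : ∀ x, c0 + c1 * χ x + 2 * (∑ i, ∑ j, f i j * jacobian v x i j)
      + G⁻¹ * nullL a (jacobian v x) ≤ 
      min (frob2 (F + jacobian v x - a₀)) (frob2 (F + jacobian v x - a₁)) := by
    intro x
    rw [hmin, frob2_expand]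
    have h1 := aux_pointwise hG (jacobian v x)
    set q := ∑ i, ∑ j, a i j * jacobian v x i j with hq
    have h2 : G⁻¹ * (q ^ 2 + nullL a (jacobian v x)) ≤ frob2 (jacobian v x) := by
      rw [inv_mul_le_iff₀ hGpos]; exact h1
    have h3 : 2 * (χ x - θ) * q ≤ G * (χ x - θ) ^ 2 + G⁻¹ * q ^ 2 := by
      have : G * (χ x - θ) ^ 2 + G⁻¹ * q ^ 2 - 2 * (χ x - θ) * q = G⁻¹ * (G * (χ x - θ) - q) ^ 2 := by
        field_simp; ring
      have h4 : 0 ≤ G⁻¹ * (G * (χ x - θ) - q) ^ 2 := by positivity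
      linarith
    have h4 : (χ x - θ) ^ 2 = (1 - 2 * θ) * χ x + θ ^ 2 := by
      rw [sub_sq, hχsq]; ring
    rw [h4] at h3 ⊢
    rw [hc0, hc1]
    nlinarith [h2, h3]
  have hcont : Continuous (fun x => min (frob2 (F + jacobian v x - a₀)) (frob2 (F + jacobian v x - a₁))) :=
    (frob2_cont hv F a₀).min (frob2_cont hv F a₁)
  have hIntg : IntegrableOn (fun x => min (frob2 (F + jacobian v x - a₀)) (frob2 (F + jacobian v x - a₁))) Ω :=
    (hcont.continuousOn.integrableOn_compact hΩbdd.isCompact_closure).mono_set subset_closure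
  have hi1 : Integrable (fun x => c0 + c1 * χ x) (volume.restrict Ω) :=
    (integrable_const _).add (hχi.const_mul _)
  have hi2 : Integrable (fun x => 2 * (∑ i, ∑ j, f i j * jacobian v x i j)) (volume.restrict Ω) :=
    (hL1.integrableOn).const_mul _
  have hi3 : Integrable (fun x => G⁻¹ * nullL a (jacobian v x)) (volume.restrict Ω) :=
    (hN1.integrableOn).const_mul _
  have hmono := integral_mono ((hi1.add hi2).add hi3) hIntg hpt
  refine le_trans ?_ hmono
  have e : ∫ x in Ω, (c0 + c1 * χ x + 2 * (∑ i, ∑ j, f i j * jacobian v x i j)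
      + G⁻¹ * nullL a (jacobian v x)) = c0 * V + c1 * (θ * V) := by
    have hi12 : Integrable (fun x => c0 + c1 * χ x + 2 * (∑ i, ∑ j, f i j * jacobian v x i j))
      (volume.restrict Ω) := hi1.add hi2
    rw [integral_add hi12 hi3, integral_add hi1 hi2, integral_add (integrable_const _) (hχi.const_mul _),
      integral_const_mul, integral_const_mul, integral_const_mul, hN2', hL2', hθV]
    simp [mul_comm, Measure.real, hV]
  refine le_trans ?_ e.ge
  have := hM θ ⟨hθ0, hθ1⟩
  calc V * M ≤ V * _ := mul_le_mul_of_nonneg_left this hVpos.le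
    _ = _ := by rw [hc0, hc1]; ring

end Lower

section Upper

variable {d : ℕ}

open scoped Manifold ContDiff Topology
open Filter

/-- The two-well energy density. -/
noncomputable def Wd (a₀ a₁ X : Matrix (Fin d) (Fin d) ℝ) : ℝ :=
  min (frob2 (X - a₀)) (frob2 (X - a₁))

lemma frob2_cont' : Continuous (frob2 (d := d)) := by
  unfold frob2
  fun_prop

lemma Wd_cont (a₀ a₁ : Matrix (Fin d) (Fin d) ℝ) : Continuous (Wd a₀ a₁) :=
  (frob2_cont'.comp (continuous_id.sub continuous_const)).min
    (frob2_cont'.comp (continuous_id.sub continuous_const))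

lemma Wd_nonneg (a₀ a₁ X : Matrix (Fin d) (Fin d) ℝ) : 0 ≤ Wd a₀ a₁ X :=
  le_min (frob2_nonneg _) (frob2_nonneg _)

lemma exists_cutoff (Ω K : Set (Fin d → ℝ)) (hΩ : IsOpen Ω) (hK : IsCompact K) (hKΩ : K ⊆ Ω) :
    ∃ φ : (Fin d → ℝ) → ℝ, ContDiff ℝ (⊤ : ℕ∞) φ ∧ HasCompactSupport φ ∧ tsupport φ ⊆ Ω ∧
      (∀ x, φ x ∈ Set.Icc (0:ℝ) 1) ∧ ∀ x ∈ K, φ x = 1 ∧ fderiv ℝ φ x = 0 := by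
  obtain ⟨K', hK'c, hKK', hK'Ω⟩ := exists_compact_between hK hΩ hKΩ
  obtain ⟨f, h1, h0, hf⟩ := exists_contMDiffMap_one_nhds_of_subset_interior (n := (⊤ : ℕ∞))
    𝓘(ℝ, Fin d → ℝ) hK.isClosed hKK'
  have hts : tsupport (f : (Fin d → ℝ) → ℝ) ⊆ K' := by
    refine closure_minimal ?_ hK'c.isClosed
    intro x hx
    by_contra h
    exact hx (h0 x h)
  refine ⟨f, f.contMDiff.contDiff, HasCompactSupport.intro hK'c h0, hts.trans hK'Ω, hf, ?_⟩
  intro x hx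
  have hx1 : ∀ᶠ y in 𝓝 x, f y = 1 := (eventually_nhdsSet_iff_forall.1 h1) x hx
  refine ⟨hx1.self_of_nhds, ?_⟩
  have : (f : (Fin d → ℝ) → ℝ) =ᶠ[𝓝 x] fun _ => 1 := hx1
  rw [this.fderiv_eq]
  simp

lemma exists_primitive (p : ℝ → ℝ) (hp : ContDiff ℝ (⊤ : ℕ∞) p) (T : ℝ) (hT : 0 < T)
    (hper : Function.Periodic p T) (h0 : ∫ t in (0:ℝ)..T, p t = 0) :
    ∃ s : ℝ → ℝ, ContDiff ℝ (⊤ : ℕ∞) s ∧ (∀ x, HasDerivAt s (p x) x) ∧ Function.Periodic s T ∧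
      ∃ B, 0 < B ∧ ∀ x, |s x| ≤ B := by
  have hi : ∀ a b, IntervalIntegrable p volume a b := fun a b => hp.continuous.intervalIntegrable a b
  set s : ℝ → ℝ := fun x => ∫ t in (0:ℝ)..x, p t with hs
  have hd : ∀ x, HasDerivAt s (p x) x := fun x =>
    intervalIntegral.integral_hasDerivAt_right (hi _ _)
      (hp.continuous.stronglyMeasurableAtFilter _ _) hp.continuous.continuousAt
  have hds : deriv s = p := funext fun x => (hd x).deriv
  have hsm : ContDiff ℝ (⊤ : ℕ∞) s :=
    contDiff_infty_iff_deriv.2 ⟨fun x => (hd x).differentiableAt, by rw [hds]; exact hp⟩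
  have hsp : Function.Periodic s T := by
    intro x
    have h1 := intervalIntegral.integral_add_adjacent_intervals (hi 0 x) (hi x (x + T))
    have h2 := hper.intervalIntegral_add_eq x 0
    rw [zero_add, h0] at h2
    simp only [hs]
    linarith
  obtain ⟨B, hB⟩ := (hsp.isBounded_of_continuous hT.ne' hsm.continuous).exists_norm_le
  refine ⟨s, hsm, hd, hsp, |B| + 1, by positivity, fun x => ?_⟩
  have := hB (s x) ⟨x, rfl⟩
  rw [Real.norm_eq_abs] at this
  linarith [le_abs_self B]

/-- The (formal) Jacobian of the oscillating test function. -/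
noncomputable def Jm (b ξ : Fin d → ℝ) (φ : (Fin d → ℝ) → ℝ) (p s : ℝ → ℝ) (N : ℝ)
    (x : Fin d → ℝ) (τ : ℝ) : Matrix (Fin d) (Fin d) ℝ :=
  Matrix.of fun i j => b i * (φ x * (p τ * ξ j) + N⁻¹ * s τ * fderiv ℝ φ x (Pi.single j 1))

lemma jac_test (b ξ : Fin d → ℝ) (φ : (Fin d → ℝ) → ℝ) (p s : ℝ → ℝ) (N t : ℝ) (hN : 0 < N)
    (hφ : ContDiff ℝ (⊤ : ℕ∞) φ) (hs : ∀ x, HasDerivAt s (p x) x) (x : Fin d → ℝ) :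
    jacobian (fun y i => φ y * (N⁻¹ * s (N * (∑ k, ξ k * y k) + t)) * b i) x
      = Jm b ξ φ p s N x (N * (∑ k, ξ k * x k) + t) := by
  set L : (Fin d → ℝ) →L[ℝ] ℝ := ∑ k, ξ k • ContinuousLinearMap.proj (R := ℝ) (φ := fun _ : Fin d => ℝ) k with hL
  have hLx : ∀ y, L y = ∑ k, ξ k * y k := fun y => by simp [hL]
  have h1 : HasFDerivAt (fun y : Fin d → ℝ => N * (∑ k, ξ k * y k) + t) (N • L) x := by
    have := (L.hasFDerivAt (x := x)).const_mul N |>.add_const t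
    simpa only [hLx] using this
  have h2 := (hs (N * (∑ k, ξ k * x k) + t)).comp_hasFDerivAt x h1
  have h3 := (h2.const_mul N⁻¹)
  have hφx := ((hφ.differentiable (by simp)) x).hasFDerivAt
  have h4 := hφx.mul h3
  have h5 : HasFDerivAt (fun (y : Fin d → ℝ) (i : Fin d) => φ y * (N⁻¹ * s (N * (∑ k, ξ k * y k) + t)) * b i)
      (ContinuousLinearMap.pi fun i => b i • (φ x • (N⁻¹ • p (N * (∑ k, ξ k * x k) + t) • (N • L)) + 
        (N⁻¹ * s (N * (∑ k, ξ k * x k) + t)) • fderiv ℝ φ x)) x := by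
    rw [hasFDerivAt_pi]
    intro i
    exact h4.mul_const (b i)
  ext i j
  simp only [jacobian, Jm, Matrix.of_apply]
  rw [h5.fderiv]
  have hLj : L (Pi.single j 1) = ξ j := by
    rw [hLx]; simp [Pi.single_apply]
  simp [hLj]
  field_simp

set_option maxHeartbeats 1000000 in
lemma upper_step (Ω : Set (Fin d → ℝ)) (hΩopen : IsOpen Ω)
    (hΩbdd : Bornology.IsBounded Ω)
    (F a₀ a₁ : Matrix (Fin d) (Fin d) ℝ) (b ξ : Fin d → ℝ) (m : ℝ)
    (hm : ∀ v : (Fin d → ℝ) → (Fin d → ℝ),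
          ContDiff ℝ (⊤ : ℕ∞) v → HasCompactSupport v → tsupport v ⊆ Ω →
          m ≤ ∫ x in Ω, Wd a₀ a₁ (F + jacobian v x))
    (p : ℝ → ℝ) (hp : ContDiff ℝ (⊤ : ℕ∞) p) (hper : Function.Periodic p (2 * Real.pi))
    (h0 : ∫ t in (0:ℝ)..(2 * Real.pi), p t = 0) (hp1 : ∀ t, |p t| ≤ 1) :
    2 * Real.pi * m ≤ (volume Ω).toReal *
      ∫ t in Set.Ioc (-Real.pi) Real.pi, Wd a₀ a₁ (F + p t • Matrix.vecMulVec b ξ) := by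
  have hpi := Real.pi_pos
  obtain ⟨s, hs, hsd, hsp, B, hB0, hB⟩ := exists_primitive p hp (2 * Real.pi) (by positivity) hper h0
  have hfin : volume Ω ≠ ⊤ := hΩbdd.measure_lt_top.ne
  have : IsFiniteMeasure (volume.restrict Ω) := ⟨by simpa using hfin.lt_top⟩
  set V := (volume Ω).toReal with hV
  set P : Set ℝ := Set.Ioc (-Real.pi) Real.pi with hP
  have hPv : volume.real P = 2 * Real.pi := by
    rw [hP, Measure.real, Real.volume_Ioc, ENNReal.toReal_ofReal] <;> linarith
  set I := ∫ t in P, Wd a₀ a₁ (F + p t • Matrix.vecMulVec b ξ) with hI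
  have hI0 : 0 ≤ I := integral_nonneg fun t => Wd_nonneg _ _ _
  set C : ℝ := ∑ i, ∑ j, (|(F - a₀) i j| + |b i| * (|ξ j| + 1)) ^ 2 with hC
  have hC0 : 0 ≤ C := Finset.sum_nonneg fun _ _ => Finset.sum_nonneg fun _ _ => sq_nonneg _
  suffices hε : ∀ ε : ℝ, 0 < ε → 2 * Real.pi * m ≤ V * I + (2 * Real.pi * C) * ε by
    refine le_of_forall_pos_le_add fun δ hδ => ?_
    refine (hε (δ / (2 * Real.pi * C + 1)) (by positivity)).trans ?_
    have : (2 * Real.pi * C) * (δ / (2 * Real.pi * C + 1)) ≤ δ := by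
      rw [mul_div_assoc', div_le_iff₀ (by positivity)]
      nlinarith
    linarith
  intro ε hε
  obtain ⟨K, hKΩ, hKc, hKε⟩ := hΩopen.measurableSet.exists_isCompact_sdiff_lt hfin
    (ε := ENNReal.ofReal ε) (by simpa using hε)
  obtain ⟨φ, hφ, hφc, hφΩ, hφ01, hφK⟩ := exists_cutoff Ω K hΩopen hKc hKΩ
  -- bound on the gradient of φ
  have hφ' : ∀ j, Continuous (fun x => fderiv ℝ φ x (Pi.single j 1)) := fun j =>
    (hφ.continuous_fderiv (by simp)).clm_apply continuous_const
  have hDb : ∀ j : Fin d, ∃ D, ∀ x, |fderiv ℝ φ x (Pi.single j 1)| ≤ D := by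
    intro j
    obtain ⟨D, hD⟩ := (hφc.fderiv_apply ℝ (Pi.single j 1)).exists_bound_of_continuous (hφ' j)
    exact ⟨D, hD⟩
  choose D hD using hDb
  set N : ℝ := 1 + B * ∑ j, |D j| with hN
  have hNpos : 0 < N := by positivity
  have hsmall : ∀ x τ j, |N⁻¹ * s τ * fderiv ℝ φ x (Pi.single j 1)| ≤ 1 := by
    intro x τ j
    rw [abs_mul, abs_mul, abs_inv, abs_of_pos hNpos, mul_assoc, inv_mul_le_iff₀ hNpos, mul_one]
    calc |s τ| * |fderiv ℝ φ x (Pi.single j 1)| ≤ B * ∑ j, |D j| := by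
          refine mul_le_mul (hB τ) ?_ (abs_nonneg _) hB0.le
          exact ((hD j x).trans (le_abs_self _)).trans
            (Finset.single_le_sum (f := fun j => |D j|) (fun _ _ => abs_nonneg _) (Finset.mem_univ j))
      _ ≤ N := by rw [hN]; linarith
  set w : (Fin d → ℝ) → ℝ → ℝ := fun x τ => Wd a₀ a₁ (F + Jm b ξ φ p s N x τ) with hw
  have hJc : Continuous (fun z : (Fin d → ℝ) × ℝ => Jm b ξ φ p s N z.1 z.2) := by
    refine continuous_matrix fun i j => ?_
    simp only [Jm, Matrix.of_apply]
    have h1 := hφ.continuous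
    have h2 := hp.continuous
    have h3 := hs.continuous
    have h4 := (hφ' j).comp (continuous_fst (X := Fin d → ℝ) (Y := ℝ))
    simp only [Function.comp_def] at h4
    fun_prop
  have hwc : Continuous (fun z : (Fin d → ℝ) × ℝ => w z.1 z.2) :=
    (Wd_cont a₀ a₁).comp (continuous_const.add hJc)
  have hw0 : ∀ x τ, 0 ≤ w x τ := fun x τ => Wd_nonneg _ _ _
  have hwC : ∀ x τ, w x τ ≤ C := by
    intro x τ
    refine (min_le_left _ _).trans ?_
    refine Finset.sum_le_sum fun i _ => Finset.sum_le_sum fun j _ => ?_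
    rw [← sq_abs]
    refine pow_le_pow_left₀ (abs_nonneg _) ?_ 2
    have e : (F + Jm b ξ φ p s N x τ - a₀) i j = (F - a₀) i j +
        b i * (φ x * (p τ * ξ j) + N⁻¹ * s τ * fderiv ℝ φ x (Pi.single j 1)) := by
      simp only [Jm, Matrix.add_apply, Matrix.sub_apply, Matrix.of_apply]; ring
    rw [e]
    refine (abs_add_le _ _).trans ?_
    gcongr
    rw [abs_mul]
    gcongr
    refine (abs_add_le _ _).trans ?_
    refine add_le_add ?_ (hsmall x τ j)
    rw [abs_mul, abs_mul]
    have h1 : |φ x| ≤ 1 := by rw [abs_of_nonneg (hφ01 x).1]; exact (hφ01 x).2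
    calc |φ x| * (|p τ| * |ξ j|) ≤ 1 * (1 * |ξ j|) := by gcongr; exact hp1 τ
      _ = _ := by ring
  have hwper : ∀ x, Function.Periodic (w x) (2 * Real.pi) := by
    intro x τ
    simp only [hw, Jm, hper τ, hsp τ]
  -- the average over phases
  have hE : ∀ t, m ≤ ∫ x in Ω, w x (N * (∑ k, ξ k * x k) + t) := by
    intro t
    set v : (Fin d → ℝ) → (Fin d → ℝ) := 
      fun y i => φ y * (N⁻¹ * s (N * (∑ k, ξ k * y k) + t)) * b i with hv
    have hsupp : Function.support v ⊆ Function.support φ := by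
      intro y hy hy0
      apply hy
      ext i
      simp only [hv]
      rw [show φ y = 0 from hy0]; simp
    have h1 : ContDiff ℝ (⊤ : ℕ∞) v := by
      refine contDiff_pi.2 fun i => ?_
      refine ContDiff.mul (hφ.mul (contDiff_const.mul (hs.comp ?_))) contDiff_const
      fun_prop
    have h2 := hm v h1 (hφc.mono hsupp) ((closure_mono hsupp).trans hφΩ)
    refine h2.trans (le_of_eq ?_)
    refine integral_congr_ae (Eventually.of_forall fun x => ?_)
    simp only [hw, hv]
    rw [jac_test b ξ φ p s N t hNpos hφ hsd x]
  have hPfin : IsFiniteMeasure (volume.restrict P) := ⟨by simp [hP]⟩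
  clear_value w
  have hsc : Continuous (fun z : ℝ × (Fin d → ℝ) => w z.2 (N * (∑ k, ξ k * z.2 k) + z.1)) := by
    have : Continuous (fun z : ℝ × (Fin d → ℝ) => (z.2, N * (∑ k, ξ k * z.2 k) + z.1)) := by fun_prop
    exact Continuous.comp (g := fun z : (Fin d → ℝ) × ℝ => w z.1 z.2)
      (f := fun z : ℝ × (Fin d → ℝ) => (z.2, N * (∑ k, ξ k * z.2 k) + z.1)) hwc this
  have hIntg : Integrable (Function.uncurry fun (t : ℝ) (x : Fin d → ℝ) => w x (N * (∑ k, ξ k * x k) + t))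
      ((volume.restrict P).prod (volume.restrict Ω)) := by
    refine Integrable.of_bound (C := C) hsc.aestronglyMeasurable (Eventually.of_forall fun z => ?_)
    simp only [Function.uncurry]
    rw [Real.norm_eq_abs, abs_of_nonneg (hw0 _ _)]
    exact hwC _ _
  have hshift : ∀ x c, ∫ t in P, w x (c + t) = ∫ t in P, w x t := by
    intro x c
    rw [hP, ← intervalIntegral.integral_of_le (by linarith), ← intervalIntegral.integral_of_le (by linarith),
      intervalIntegral.integral_comp_add_left]
    have := (hwper x).intervalIntegral_add_eq (c + -Real.pi) (-Real.pi)
    convert this using 2 <;> ring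
  have hKP : ∀ x ∈ K, ∫ t in P, w x t = I := by
    intro x hx
    refine integral_congr_ae (Eventually.of_forall fun t => ?_)
    simp only [hw]
    congr 2
    ext i j
    simp only [Jm, (hφK x hx).1, (hφK x hx).2, Matrix.of_apply, Matrix.smul_apply, Matrix.vecMulVec_apply]
    simp; ring
  have hHC : ∀ x, ∫ t in P, w x t ≤ 2 * Real.pi * C := by
    intro x
    calc ∫ t in P, w x t ≤ ∫ t in P, C := by
          refine integral_mono_of_nonneg (Eventually.of_forall fun t => hw0 x t) (integrable_const _)
            (Eventually.of_forall fun t => hwC x t)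
      _ = 2 * Real.pi * C := by simp [hPv]
  calc 2 * Real.pi * m = ∫ t in P, m := by simp [hPv]
    _ ≤ ∫ t in P, ∫ x in Ω, w x (N * (∑ k, ξ k * x k) + t) :=
        integral_mono (integrable_const _) hIntg.integral_prod_left hE
    _ = ∫ x in Ω, ∫ t in P, w x (N * (∑ k, ξ k * x k) + t) := integral_integral_swap hIntg
    _ = ∫ x in Ω, ∫ t in P, w x t := by simp only [hshift]
    _ ≤ ∫ x in Ω, (I + Kᶜ.indicator (fun _ => 2 * Real.pi * C) x) := by
        refine integral_mono_of_nonneg (Eventually.of_forall fun x => integral_nonneg fun t => hw0 x t)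
          ((integrable_const _).add ((integrable_const _).indicator hKc.measurableSet.compl))
          (Eventually.of_forall fun x => ?_)
        by_cases hx : x ∈ K
        · simp [hx, hKP x hx]
        · have := hHC x
          simp only [Set.mem_compl_iff, hx, not_false_eq_true, Set.indicator_of_mem]
          linarith
    _ = V * I + (2 * Real.pi * C) * (volume (Ω \ K)).toReal := by
        rw [integral_add (integrable_const _) ((integrable_const _).indicator hKc.measurableSet.compl),
          integral_indicator hKc.measurableSet.compl, Measure.restrict_restrict hKc.measurableSet.compl,
          Set.inter_comm, ← Set.sdiff_eq]
        simp [Measure.real, hV, mul_comm]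
    _ ≤ V * I + (2 * Real.pi * C) * ε := by
        have : (volume (Ω \ K)).toReal ≤ ε := ENNReal.toReal_le_of_le_ofReal hε.le hKε.le
        gcongr


lemma int_chi (θ : ℝ) (hθ : θ ∈ Set.Icc (0:ℝ) 1) :
    ∫ t in Set.Ioc (-Real.pi) Real.pi,
      Set.indicator {t | Real.cos (Real.pi * θ) < Real.cos t} (fun _ => (1:ℝ)) t
      = 2 * Real.pi * θ := by
  have hpi := Real.pi_pos
  have hm : MeasurableSet {t | Real.cos (Real.pi * θ) < Real.cos t} :=
    (isOpen_lt continuous_const Real.continuous_cos).measurableSet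
  have hθ1 : Real.pi * θ ≤ Real.pi := by nlinarith [hθ.2]
  have hθ0 : 0 ≤ Real.pi * θ := mul_nonneg hpi.le hθ.1
  rw [integral_indicator hm, Measure.restrict_restrict hm]
  have : {t | Real.cos (Real.pi * θ) < Real.cos t} ∩ Set.Ioc (-Real.pi) Real.pi
      = Set.Ioo (-(Real.pi * θ)) (Real.pi * θ) := by
    ext t
    simp only [Set.mem_inter_iff, Set.mem_ofPred_eq, Set.mem_Ioc, Set.mem_Ioo]
    have key : |t| ≤ Real.pi → (Real.cos (Real.pi * θ) < Real.cos t ↔ |t| < Real.pi * θ) := by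
      intro ht
      rw [← Real.cos_abs t]
      exact Real.strictAntiOn_cos.lt_iff_gt ⟨hθ0, hθ1⟩ ⟨abs_nonneg t, ht⟩
    constructor
    · rintro ⟨h1, h2, h3⟩
      exact abs_lt.1 ((key (abs_le.2 ⟨h2.le, h3⟩)).1 h1)
    · intro h
      have h' : |t| < Real.pi * θ := abs_lt.2 h
      refine ⟨(key (h'.le.trans hθ1)).2 h', by linarith [h.1], by linarith [h.2]⟩
  rw [this]
  simp only [integral_const, MeasurableSet.univ, measureReal_restrict_apply, Set.univ_inter]
  rw [Measure.real, Real.volume_Ioo, ENNReal.toReal_ofReal (by linarith)]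
  simp; ring

lemma upper_bound (Ω : Set (Fin d → ℝ)) (hΩopen : IsOpen Ω)
    (hΩbdd : Bornology.IsBounded Ω)
    (F a₀ a₁ : Matrix (Fin d) (Fin d) ℝ) (ξ : Fin d → ℝ) (hξ : ∑ i, ξ i ^ 2 = 1) (m : ℝ)
    (hm : ∀ v : (Fin d → ℝ) → (Fin d → ℝ),
          ContDiff ℝ (⊤ : ℕ∞) v → HasCompactSupport v → tsupport v ⊆ Ω →
          m ≤ ∫ x in Ω, Wd a₀ a₁ (F + jacobian v x))
    (θ : ℝ) (hθ : θ ∈ Set.Icc (0:ℝ) 1) :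
    m ≤ (volume Ω).toReal * (frob2 (F - ((1 - θ) • a₀ + θ • a₁)) +
          θ * (1 - θ) * (frob2 (a₁ - a₀) - ∑ i, ((a₁ - a₀).mulVec ξ i) ^ 2)) := by
  have hpi := Real.pi_pos
  set a := a₁ - a₀ with ha
  set b := a.mulVec ξ with hb
  set P : Set ℝ := Set.Ioc (-Real.pi) Real.pi with hP
  have hPv : volume.real P = 2 * Real.pi := by
    rw [hP, Measure.real, Real.volume_Ioc, ENNReal.toReal_ofReal] <;> linarith
  have hPfin : IsFiniteMeasure (volume.restrict P) := ⟨by simp [hP]⟩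
  set c := Real.cos (Real.pi * θ) with hc
  set A : Set ℝ := {t | c < Real.cos t} with hA
  have hAm : MeasurableSet A := (isOpen_lt continuous_const Real.continuous_cos).measurableSet
  set χ : ℝ → ℝ := A.indicator (fun _ => (1:ℝ)) with hχ
  have hχint : ∫ t in P, χ t = 2 * Real.pi * θ := int_chi θ hθ
  have hχi : Integrable χ (volume.restrict P) := (integrable_const (1:ℝ)).indicator hAm
  have hχsq : ∀ x, χ x ^ 2 = χ x := fun x => by
    by_cases h : x ∈ A <;> simp [hχ, h]
  set q : ℕ → ℝ → ℝ := fun k t => Real.smoothTransition (k * (Real.cos t - c)) with hq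
  have hqs : ∀ k, ContDiff ℝ (⊤ : ℕ∞) (q k) := fun k =>
    Real.smoothTransition.contDiff.comp
      (contDiff_const.mul (Real.contDiff_cos.sub contDiff_const))
  have hq0 : ∀ k t, 0 ≤ q k t := fun k t => Real.smoothTransition.nonneg _
  have hq1 : ∀ k t, q k t ≤ 1 := fun k t => Real.smoothTransition.le_one _
  have hqlim : ∀ t, Tendsto (fun k => q k t) atTop (𝓝 (χ t)) := by
    intro t
    by_cases h : t ∈ A
    · have hpos : 0 < Real.cos t - c := sub_pos.2 h
      have h1 : Tendsto (fun k : ℕ => (k:ℝ) * (Real.cos t - c)) atTop atTop :=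
        tendsto_natCast_atTop_atTop.atTop_mul_const hpos
      refine tendsto_const_nhds.congr' ?_
      filter_upwards [h1.eventually_ge_atTop 1] with k hk
      simp only [hχ, h, Set.indicator_of_mem, hq]
      exact (Real.smoothTransition.one_of_one_le hk).symm
    · have hneg : Real.cos t - c ≤ 0 := sub_nonpos.2 (not_lt.1 h)
      refine tendsto_const_nhds.congr fun k => ?_
      simp only [hχ, h, Set.indicator_of_notMem, hq, not_false_eq_true]
      exact (Real.smoothTransition.zero_of_nonpos (mul_nonpos_of_nonneg_of_nonpos (Nat.cast_nonneg k) hneg)).symm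
  set μ : ℕ → ℝ := fun k => (∫ t in P, q k t) / (2 * Real.pi) with hμ
  have hqi : ∀ k, Integrable (q k) (volume.restrict P) := fun k =>
    Integrable.of_bound (C := 1) (hqs k).continuous.aestronglyMeasurable
      (Eventually.of_forall fun t => by rw [Real.norm_eq_abs, abs_of_nonneg (hq0 k t)]; exact hq1 k t)
  have hμ0 : ∀ k, 0 ≤ μ k := fun k => div_nonneg (integral_nonneg (hq0 k)) (by positivity)
  have hμ1 : ∀ k, μ k ≤ 1 := fun k => by
    simp only [hμ]
    rw [div_le_one (by positivity)]
    calc ∫ t in P, q k t ≤ ∫ t in P, (1:ℝ) := integral_mono (hqi k) (integrable_const _) (hq1 k)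
      _ = 2 * Real.pi := by simp [hPv]
  have hμlim : Tendsto μ atTop (𝓝 θ) := by
    have h1 : Tendsto (fun k => ∫ t in P, q k t) atTop (𝓝 (∫ t in P, χ t)) :=
      tendsto_integral_of_dominated_convergence (fun _ => (1:ℝ))
        (fun k => (hqs k).continuous.aestronglyMeasurable) (integrable_const _)
        (fun k => Eventually.of_forall fun t => by
          rw [Real.norm_eq_abs, abs_of_nonneg (hq0 k t)]; exact hq1 k t)
        (Eventually.of_forall hqlim)
    have h2 := h1.div_const (2 * Real.pi)
    rw [hχint, mul_div_cancel_left₀ θ (by positivity)] at h2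
    exact h2
  set p : ℕ → ℝ → ℝ := fun k t => q k t - μ k with hp
  have hp1 : ∀ k t, |p k t| ≤ 1 := fun k t => by
    simp only [hp]
    rw [abs_le]; constructor <;> linarith [hq0 k t, hq1 k t, hμ0 k, hμ1 k]
  have hpper : ∀ k, Function.Periodic (p k) (2 * Real.pi) := fun k t => by
    simp only [hp, hq, Real.cos_add_two_pi]
  have hps : ∀ k, ContDiff ℝ (⊤ : ℕ∞) (p k) := fun k => (hqs k).sub contDiff_const
  have hpint : ∀ k, ∫ t in (0:ℝ)..(2 * Real.pi), p k t = 0 := fun k => by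
    have h1 := (hpper k).intervalIntegral_add_eq 0 (-Real.pi)
    rw [zero_add] at h1
    rw [h1, show -Real.pi + 2 * Real.pi = Real.pi by ring,
      intervalIntegral.integral_of_le (by linarith)]
    change ∫ t in P, (q k t - μ k) = 0
    rw [integral_sub (hqi k) (integrable_const _)]
    simp only [integral_const, MeasurableSet.univ, measureReal_restrict_apply, Set.univ_inter, hPv, hμ, smul_eq_mul]
    field_simp; ring
  set Bm := Matrix.vecMulVec b ξ with hBm
  set w1 : ℝ → ℝ := fun r => Wd a₀ a₁ (F + r • Bm) with hw1
  have hw1c : Continuous w1 := (Wd_cont a₀ a₁).comp (by fun_prop)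
  obtain ⟨C1, hC1⟩ := (isCompact_Icc (a := (-1:ℝ)) (b := 1)).exists_bound_of_continuousOn hw1c.continuousOn
  have hIlim : Tendsto (fun k => ∫ t in P, w1 (p k t)) atTop (𝓝 (∫ t in P, w1 (χ t - θ))) :=
    tendsto_integral_of_dominated_convergence (fun _ => C1)
      (fun k => (hw1c.comp (hps k).continuous).aestronglyMeasurable) (integrable_const _)
      (fun k => Eventually.of_forall fun t => hC1 _ (abs_le.1 (hp1 k t)))
      (Eventually.of_forall fun t => (hw1c.tendsto _).comp ((hqlim t).sub hμlim))
  have hstep : ∀ k, 2 * Real.pi * m ≤ (volume Ω).toReal * ∫ t in P, w1 (p k t) := fun k =>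
    upper_step Ω hΩopen hΩbdd F a₀ a₁ b ξ m hm (p k) (hps k) (hpper k) (hpint k) (hp1 k)
  have hlim : 2 * Real.pi * m ≤ (volume Ω).toReal * ∫ t in P, w1 (χ t - θ) :=
    ge_of_tendsto' (hIlim.const_mul _) hstep
  -- evaluate the limit energy
  set f := F - ((1 - θ) • a₀ + θ • a₁) with hf
  have hfro : frob2 (a - Bm) = frob2 a - ∑ i, b i ^ 2 := by
    have h1 : ∑ i, ∑ j, a i j * (b i * ξ j) = ∑ i, b i ^ 2 := by
      refine Finset.sum_congr rfl fun i _ => ?_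
      rw [sq]
      nth_rewrite 3 [hb]
      simp only [Matrix.mulVec, dotProduct, Finset.mul_sum]
      refine Finset.sum_congr rfl fun j _ => by ring
    have h2 : ∑ i, ∑ j, (b i * ξ j) ^ 2 = ∑ i, b i ^ 2 := by
      refine Finset.sum_congr rfl fun i _ => ?_
      simp only [mul_pow, ← Finset.mul_sum, hξ, mul_one]
    have h3 : frob2 (a - Bm) = frob2 a - 2 * ∑ i, ∑ j, a i j * (b i * ξ j) + ∑ i, ∑ j, (b i * ξ j) ^ 2 := by
      unfold frob2
      simp only [Finset.mul_sum, ← Finset.sum_add_distrib, ← Finset.sum_sub_distrib]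
      refine Finset.sum_congr rfl fun i _ => Finset.sum_congr rfl fun j _ => ?_
      simp only [Matrix.sub_apply, hBm, Matrix.vecMulVec_apply]
      ring
    rw [h3, h1, h2]; ring
  set c1 : ℝ := (1 - 2 * θ) * (frob2 a - ∑ i, b i ^ 2) - 2 * (∑ i, ∑ j, f i j * (a - Bm) i j) with hc1
  set c0 : ℝ := frob2 f + θ ^ 2 * (frob2 a - ∑ i, b i ^ 2) + 2 * θ * (∑ i, ∑ j, f i j * (a - Bm) i j) with hc0
  have hpt : ∀ t, w1 (χ t - θ) ≤ c0 + c1 * χ t := by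
    intro t
    have h1 : w1 (χ t - θ) ≤ frob2 (f + 0 - (χ t - θ) • (a - Bm)) := by
      simp only [hw1, Wd]
      by_cases h : t ∈ A
      · refine (min_le_right _ _).trans (le_of_eq ?_)
        congr 1
        simp only [hχ, h, Set.indicator_of_mem, hf, ha]
        module
      · refine (min_le_left _ _).trans (le_of_eq ?_)
        congr 1
        simp only [hχ, h, Set.indicator_of_notMem, hf, ha, not_false_eq_true]
        module
    refine h1.trans (le_of_eq ?_)
    rw [frob2_expand, hfro, sub_sq, hχsq, hc0, hc1]
    have : frob2 (0 : Matrix (Fin d) (Fin d) ℝ) = 0 := by simp [frob2]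
    rw [this]
    simp only [Matrix.zero_apply, mul_zero, Finset.sum_const_zero]
    ring
  have hfinal : ∫ t in P, w1 (χ t - θ) ≤ 2 * Real.pi * (frob2 f + θ * (1 - θ) * (frob2 a - ∑ i, b i ^ 2)) := by
    calc ∫ t in P, w1 (χ t - θ) ≤ ∫ t in P, (c0 + c1 * χ t) :=
          integral_mono_of_nonneg (Eventually.of_forall fun t => Wd_nonneg _ _ _)
            ((integrable_const _).add (hχi.const_mul _)) (Eventually.of_forall hpt)
      _ = c0 * (2 * Real.pi) + c1 * (2 * Real.pi * θ) := by
          rw [integral_add (integrable_const _) (hχi.const_mul _), integral_const_mul, hχint]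
          simp [hPv, mul_comm]
      _ = _ := by rw [hc0, hc1]; ring
  have h2 : 2 * Real.pi * m ≤ 2 * Real.pi * ((volume Ω).toReal * (frob2 f + θ * (1 - θ) * (frob2 a - ∑ i, b i ^ 2))) := by
    refine hlim.trans ((mul_le_mul_of_nonneg_left hfinal ENNReal.toReal_nonneg).trans (le_of_eq ?_))
    ring
  exact le_of_mul_le_mul_left h2 (by positivity)

end Upper


/-- Relaxation formula for the two-well energy for the gradient. -/
theorem statement0
    (d : ℕ) (hd : 2 ≤ d)
    (Ω : Set (Fin d → ℝ)) (hΩopen : IsOpen Ω) (hΩne : Ω.Nonempty)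
    (hΩbdd : Bornology.IsBounded Ω)
    (F a₀ a₁ : Matrix (Fin d) (Fin d) ℝ) (hwells : a₀ ≠ a₁) :
    ∃ G M : ℝ,
      -- `G = max_{ξ ∈ S^{d-1}} ‖aξ‖²`, and the maximum is attained
      IsGreatest {g : ℝ | ∃ ξ : Fin d → ℝ, (∑ i, ξ i ^ 2) = 1 ∧
        g = ∑ i, ((a₁ - a₀).mulVec ξ i) ^ 2} G ∧
      -- `M = min_{θ ∈ [0,1]} (‖F - a_θ‖² + θ(1-θ)(‖a‖² - G))`, attained
      IsLeast {m : ℝ | ∃ θ ∈ Set.Icc (0 : ℝ) 1,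
        m = frob2 (F - ((1 - θ) • a₀ + θ • a₁)) +
          θ * (1 - θ) * (frob2 (a₁ - a₀) - G)} M ∧
      -- the infimum of the elastic energy over test fields equals `|Ω| * M`
      sInf {e : ℝ | ∃ v : (Fin d → ℝ) → (Fin d → ℝ),
          ContDiff ℝ (⊤ : ℕ∞) v ∧ HasCompactSupport v ∧ tsupport v ⊆ Ω ∧
          e = ∫ x in Ω,
            min (frob2 (F + jacobian v x - a₀)) (frob2 (F + jacobian v x - a₁))}
        = (volume Ω).toReal * M := by
  classical
  set a := a₁ - a₀ with ha
  -- existence of G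
  set S : Set (Fin d → ℝ) := {ξ | ∑ i, ξ i ^ 2 = 1} with hS
  have hSc : IsCompact S := by
    refine Metric.isCompact_of_isClosed_isBounded ?_ ?_
    · exact isClosed_eq (by fun_prop) continuous_const
    · refine (Metric.isBounded_closedBall (x := (0 : Fin d → ℝ)) (r := 1)).subset ?_
      intro ξ hξ
      rw [mem_closedBall_zero_iff, pi_norm_le_iff_of_nonneg zero_le_one]
      intro i
      rw [Real.norm_eq_abs, ← sq_le_one_iff_abs_le_one, ← (hξ : ∑ i, ξ i ^ 2 = 1)]
      exact Finset.single_le_sum (f := fun i => ξ i ^ 2) (fun _ _ => sq_nonneg _) (Finset.mem_univ i)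
  have hsingle : ∀ j : Fin d, (Pi.single j 1 : Fin d → ℝ) ∈ S := by
    intro j
    simp [hS, Pi.single_apply]
  have hSne : S.Nonempty := ⟨_, hsingle ⟨0, by omega⟩⟩
  have hgc : Continuous (fun ξ : Fin d → ℝ => ∑ i, (a.mulVec ξ i) ^ 2) := by
    have : Continuous (fun ξ : Fin d → ℝ => a.mulVec ξ) := by fun_prop
    fun_prop
  obtain ⟨ξ, hξS, hξmax⟩ := hSc.exists_isMaxOn hSne hgc.continuousOn
  set G : ℝ := ∑ i, (a.mulVec ξ i) ^ 2 with hGdef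
  have hG : ∀ ζ : Fin d → ℝ, ∑ i, ζ i ^ 2 = 1 → ∑ i, (a.mulVec ζ i) ^ 2 ≤ G := fun ζ hζ => hξmax hζ
  have hGpos : 0 < G := by
    have hane : a ≠ 0 := sub_ne_zero.2 hwells.symm
    obtain ⟨i, j, hij⟩ : ∃ i j, a i j ≠ 0 := by
      by_contra! h
      exact hane (by ext i j; exact h i j)
    refine lt_of_lt_of_le ?_ (hG _ (hsingle j))
    refine lt_of_lt_of_le ?_ (Finset.single_le_sum
      (f := fun i => (a.mulVec (Pi.single j 1) i) ^ 2) (fun _ _ => sq_nonneg _) (Finset.mem_univ i))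
    simp only [Matrix.mulVec_single_one, Matrix.col_apply]
    positivity
  -- existence of M
  have hmc : Continuous (fun θ : ℝ => frob2 (F - ((1 - θ) • a₀ + θ • a₁)) +
          θ * (1 - θ) * (frob2 a - G)) := by
    refine Continuous.add (frob2_cont'.comp (by fun_prop)) (by fun_prop)
  obtain ⟨θ, hθ, hθmin⟩ := (isCompact_Icc (a := (0:ℝ)) (b := 1)).exists_isMinOn
    (Set.nonempty_Icc.2 zero_le_one) hmc.continuousOn
  refine ⟨G, frob2 (F - ((1 - θ) • a₀ + θ • a₁)) + θ * (1 - θ) * (frob2 a - G),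
    ⟨⟨ξ, hξS, rfl⟩, ?_⟩, ⟨⟨θ, hθ, rfl⟩, ?_⟩, ?_⟩
  · rintro g ⟨ζ, hζ, rfl⟩
    exact hG ζ hζ
  · rintro m ⟨τ, hτ, rfl⟩
    exact hθmin hτ
  · have hlow := lower_bound Ω hΩopen hΩne hΩbdd F a₀ a₁ hGpos hG
      (M := frob2 (F - ((1 - θ) • a₀ + θ • a₁)) + θ * (1 - θ) * (frob2 a - G))
      (fun τ hτ => hθmin hτ)
    apply le_antisymm
    · refine upper_bound Ω hΩopen hΩbdd F a₀ a₁ ξ hξS _ ?_ θ hθ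
      intro v hv hvc hvΩ
      refine csInf_le ⟨(volume Ω).toReal *
          (frob2 (F - ((1 - θ) • a₀ + θ • a₁)) + θ * (1 - θ) * (frob2 a - G)), ?_⟩
          ⟨v, hv, hvc, hvΩ, rfl⟩
      · rintro e ⟨u, hu, huc, huΩ, rfl⟩
        exact hlow u hu huc huΩ
    · refine le_csInf ⟨_, 0, contDiff_const, HasCompactSupport.zero, ?_, rfl⟩ ?_
      · simp [tsupport]
      · rintro e ⟨u, hu, huc, huΩ, rfl⟩
        exact hlow u hu huc huΩ
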